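/- For every polynomial ∑_{ν=0}^m a_ν z^ν in one complex variable with complex coefficients, one has ‖∑_{ν=0}^m 2^{-ν/2} a_ν z^ν‖_{L²(μ)} ≤ ‖∑_{ν=0}^m a_ν z^ν‖_{L¹(μ)}, i.e. (∑_{ν=0}^m 2^{-ν} |a_ν|²)^{1/2} ≤ ∫_{𝕋} |∑_{ν=0}^m a_ν z^ν| dμ(z). (Bonami's one-variable hypercontractivity inequality.) -/

import Mathlib

open Finset

/-! Write the polynomial as `f = g * h` with `g`, `h` in the disc algebra and `‖g‖ = ‖h‖` on the
unit circle, so that `‖f‖_{L¹} = ‖g‖_{L²} ‖h‖_{L²}`. The `n`-th Taylor coefficient of `f` is a sum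
of `n + 1` products of coefficients of `g` and `h`: Cauchy-Schwarz costs the factor `n + 1 ≤ 2 ^ n`,
and Bessel's inequality for `g` and `h` does the rest. The factorization is multiplicative in `f`,
so linear factors suffice: for `1 ≤ ‖w‖`, `z - w` has a square root in the disc algebra, and for
`‖w‖ < 1` it has the same modulus on the circle as `1 - conj w * z`, which has one. -/

section CauchyProduct

lemma sum_range_sum_antidiagonal_mul_le {R : Type*} [CommSemiring R] [PartialOrder R]
    [IsOrderedRing R] {a b : ℕ → R} (ha : ∀ n, 0 ≤ a n) (hb : ∀ n, 0 ≤ b n) (N : ℕ) :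
    ∑ n ∈ range N, ∑ p ∈ antidiagonal n, a p.1 * b p.2
      ≤ (∑ n ∈ range N, a n) * ∑ n ∈ range N, b n := by
  calc ∑ n ∈ range N, ∑ p ∈ antidiagonal n, a p.1 * b p.2
      = ∑ n ∈ range N, ∑ k ∈ range (n + 1), a k * b (n - k) := by
        simp only [Nat.sum_antidiagonal_eq_sum_range_succ fun i j ↦ a i * b j]
    _ = ∑ i ∈ range N, ∑ j ∈ range (N - i), a i * b j :=
        sum_range_diag_flip N fun i j ↦ a i * b j
    _ ≤ ∑ i ∈ range N, ∑ j ∈ range N, a i * b j := by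
        gcongr with i
        · exact fun j _ _ ↦ mul_nonneg (ha i) (hb j)
        · exact Nat.sub_le N i
    _ = (∑ n ∈ range N, a n) * ∑ n ∈ range N, b n := sum_mul_sum .. |>.symm

variable {A : Type*} [NonUnitalSeminormedRing A]

lemma norm_sum_antidiagonal_mul_sq_le (u v : ℕ → A) (n : ℕ) :
    ‖∑ p ∈ antidiagonal n, u p.1 * v p.2‖ ^ 2
      ≤ (n + 1) * ∑ p ∈ antidiagonal n, ‖u p.1‖ ^ 2 * ‖v p.2‖ ^ 2 := by
  calc ‖∑ p ∈ antidiagonal n, u p.1 * v p.2‖ ^ 2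
      ≤ (∑ p ∈ antidiagonal n, ‖u p.1‖ * ‖v p.2‖) ^ 2 := by
        gcongr
        exact norm_sum_le_of_le _ fun p _ ↦ norm_mul_le _ _
    _ ≤ #(antidiagonal n) * ∑ p ∈ antidiagonal n, (‖u p.1‖ * ‖v p.2‖) ^ 2 :=
        sq_sum_le_card_mul_sum_sq
    _ = (n + 1) * ∑ p ∈ antidiagonal n, ‖u p.1‖ ^ 2 * ‖v p.2‖ ^ 2 := by
        simp only [Nat.card_antidiagonal, Nat.cast_add, Nat.cast_one, mul_pow]

lemma sum_norm_sum_antidiagonal_mul_sq_div_le (u v : ℕ → A) (N : ℕ) :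
    ∑ n ∈ range N, ‖∑ p ∈ antidiagonal n, u p.1 * v p.2‖ ^ 2 / (n + 1)
      ≤ (∑ n ∈ range N, ‖u n‖ ^ 2) * ∑ n ∈ range N, ‖v n‖ ^ 2 := by
  calc ∑ n ∈ range N, ‖∑ p ∈ antidiagonal n, u p.1 * v p.2‖ ^ 2 / (n + 1)
      ≤ ∑ n ∈ range N, ∑ p ∈ antidiagonal n, ‖u p.1‖ ^ 2 * ‖v p.2‖ ^ 2 := by
        gcongr with n
        rw [div_le_iff₀' (by positivity)]
        exact norm_sum_antidiagonal_mul_sq_le u v n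
    _ ≤ (∑ n ∈ range N, ‖u n‖ ^ 2) * ∑ n ∈ range N, ‖v n‖ ^ 2 :=
        sum_range_sum_antidiagonal_mul_le (a := fun n ↦ ‖u n‖ ^ 2) (b := fun n ↦ ‖v n‖ ^ 2)
          (fun _ ↦ by positivity) (fun _ ↦ by positivity) N

end CauchyProduct

section TaylorCoeff

open Filter Metric Topology
open scoped Nat Real

variable {𝕜 : Type*} [NontriviallyNormedField 𝕜]

/-- The `n`-th Taylor coefficient of `f` at `c`, i.e. the coefficient of `(z - c) ^ n`. -/
noncomputable def taylorCoeff {E : Type*} [NormedAddCommGroup E] [NormedSpace 𝕜 E]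
    (f : 𝕜 → E) (c : 𝕜) (n : ℕ) : E :=
  (n ! : 𝕜)⁻¹ • iteratedDeriv n f c

lemma taylorCoeff_congr {E : Type*} [NormedAddCommGroup E] [NormedSpace 𝕜 E]
    {f g : 𝕜 → E} {c : 𝕜} (h : f =ᶠ[𝓝 c] g) (n : ℕ) : taylorCoeff f c n = taylorCoeff g c n := by
  rw [taylorCoeff, taylorCoeff, h.iteratedDeriv_eq]

lemma taylorCoeff_mul [CharZero 𝕜] {A : Type*} [NormedRing A] [NormedAlgebra 𝕜 A]
    {f g : 𝕜 → A} {c : 𝕜} {n : ℕ} (hf : ContDiffAt 𝕜 n f c) (hg : ContDiffAt 𝕜 n g c) :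
    taylorCoeff (f * g) c n
      = ∑ p ∈ antidiagonal n, taylorCoeff f c p.1 * taylorCoeff g c p.2 := by
  rw [Nat.sum_antidiagonal_eq_sum_range_succ_mk, taylorCoeff, iteratedDeriv_mul hf hg, smul_sum]
  refine sum_congr rfl fun i hi ↦ ?_
  have hin : i ≤ n := Nat.lt_succ_iff.mp (mem_range.mp hi)
  have choose_div : (n ! : 𝕜)⁻¹ * n.choose i = (i ! : 𝕜)⁻¹ * ((n - i)! : 𝕜)⁻¹ := by
    have := Nat.cast_ne_zero (R := 𝕜).mpr n.factorial_ne_zero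
    rw [Nat.cast_choose 𝕜 hin]
    field_simp
  simp only [taylorCoeff]
  rw [smul_mul_smul_comm, ← choose_div, mul_smul, Nat.cast_smul_eq_nsmul 𝕜, nsmul_eq_mul, mul_assoc]

lemma iteratedDeriv_polynomial_eval (p : Polynomial 𝕜) (n : ℕ) :
    iteratedDeriv n (fun z ↦ p.eval z) = fun z ↦ (Polynomial.derivative^[n] p).eval z := by
  induction n with
  | zero => simp
  | succ n ih =>
    rw [iteratedDeriv_succ, ih, Function.iterate_succ_apply']
    ext z
    exact Polynomial.deriv _

lemma taylorCoeff_polynomial_eval [CharZero 𝕜] (p : Polynomial 𝕜) (c : 𝕜) (n : ℕ) :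
    taylorCoeff (fun z ↦ p.eval z) c n = (p.taylor c).coeff n := by
  simp only [taylorCoeff, iteratedDeriv_polynomial_eval, ← Polynomial.factorial_smul_hasseDeriv,
    Polynomial.taylor_coeff, LinearMap.smul_apply, Polynomial.eval_smul]
  rw [← Nat.cast_smul_eq_nsmul 𝕜, inv_smul_smul₀ (Nat.cast_ne_zero.mpr n.factorial_ne_zero)]

section Circle

variable {c : ℂ} {R : ℝ}

lemma fourierCoeffOn_circleMap {E : Type*} [NormedAddCommGroup E] [NormedSpace ℂ E]
    [CompleteSpace E] {f : ℂ → E} (hR : 0 < R) (hf : DiffContOnCl ℂ f (ball c R)) (n : ℕ) :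
    fourierCoeffOn Real.two_pi_pos (fun θ ↦ f (circleMap c R θ)) n
      = (R : ℂ) ^ n • taylorCoeff f c n := by
  have cauchy_integral : (∫ θ in 0..2 * π, deriv (circleMap c R) θ •
      (1 / (circleMap c R θ - c) ^ (n + 1)) • f (circleMap c R θ))
        = (2 * π * Complex.I / n !) • iteratedDeriv n f c :=
    hf.circleIntegral_one_div_sub_center_pow_smul hR n
  have integrand_eq (θ : ℝ) :
      fourier (-(n : ℤ)) (θ : AddCircle (2 * π - 0)) • f (circleMap c R θ)
        = ((R : ℂ) ^ n / Complex.I) • deriv (circleMap c R) θ •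
          (1 / (circleMap c R θ - c) ^ (n + 1)) • f (circleMap c R θ) := by
    have fourier_eq : fourier (-(n : ℤ)) (θ : AddCircle (2 * π - 0))
        = (Complex.exp (θ * Complex.I) ^ n)⁻¹ := by
      rw [fourier_coe_apply, ← Complex.exp_nat_mul, ← Complex.exp_neg]
      congr 1
      push_cast
      field
    rw [fourier_eq, deriv_circleMap, circleMap_sub_center, circleMap_zero]
    have hexp := Complex.exp_ne_zero (θ * Complex.I)
    have hR₀ : (R : ℂ) ≠ 0 := Complex.ofReal_ne_zero.mpr hR.ne'
    simp only [smul_smul, pow_succ, mul_pow]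
    congr 1
    field_simp
  rw [fourierCoeffOn_eq_integral]
  simp_rw [integrand_eq]
  rw [intervalIntegral.integral_smul, cauchy_integral, taylorCoeff, ← Complex.coe_smul]
  simp only [smul_smul]
  congr 1
  push_cast
  field_simp
  ring

lemma sum_norm_taylorCoeff_sq_le_circleAverage {f : ℂ → ℂ} (hR : 0 < R)
    (hf : DiffContOnCl ℂ f (ball c R)) (s : Finset ℕ) :
    ∑ n ∈ s, (R ^ n * ‖taylorCoeff f c n‖) ^ 2
      ≤ Real.circleAverage (fun z ↦ ‖f z‖ ^ 2) c R := by
  have hcont : Continuous fun θ ↦ f (circleMap c R θ) :=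
    hf.continuousOn_ball.comp_continuous (continuous_circleMap c R)
      fun θ ↦ circleMap_mem_closedBall c hR.le θ
  have hL2 : MeasureTheory.MemLp (fun θ ↦ f (circleMap c R θ)) 2
      (MeasureTheory.volume.restrict (Set.Ioc 0 (2 * π))) := by
    rw [MeasureTheory.memLp_two_iff_integrable_sq_norm hcont.aestronglyMeasurable]
    exact (hcont.norm.pow 2).integrableOn_Ioc
  have parseval := hasSum_sq_fourierCoeffOn Real.two_pi_pos hL2
  rw [sub_zero] at parseval
  calc ∑ n ∈ s, (R ^ n * ‖taylorCoeff f c n‖) ^ 2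
      = ∑ k ∈ s.map Nat.castEmbedding,
          ‖fourierCoeffOn Real.two_pi_pos (fun θ ↦ f (circleMap c R θ)) k‖ ^ 2 := by
        simp [fourierCoeffOn_circleMap hR hf, abs_of_pos hR]
    _ ≤ Real.circleAverage (fun z ↦ ‖f z‖ ^ 2) c R :=
        sum_le_hasSum _ (fun _ _ ↦ by positivity) parseval

end Circle

end TaylorCoeff

section BalancedFactorization

open Metric ComplexConjugate

/-- `f` is, on the closed unit disc, the product of two functions of the disc algebra which have the
same modulus on the unit circle. -/
def HasBalancedFactorization (f : ℂ → ℂ) : Prop :=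
  ∃ g h : ℂ → ℂ, DiffContOnCl ℂ g (ball 0 1) ∧ DiffContOnCl ℂ h (ball 0 1) ∧
    (∀ z ∈ closedBall 0 1, f z = g z * h z) ∧ ∀ z ∈ sphere 0 1, ‖g z‖ = ‖h z‖

namespace HasBalancedFactorization

lemma mul {f₁ f₂ : ℂ → ℂ} (hf₁ : HasBalancedFactorization f₁) (hf₂ : HasBalancedFactorization f₂) :
    HasBalancedFactorization (f₁ * f₂) := by
  obtain ⟨g₁, h₁, hg₁, hh₁, eq₁, norm_eq₁⟩ := hf₁
  obtain ⟨g₂, h₂, hg₂, hh₂, eq₂, norm_eq₂⟩ := hf₂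
  refine ⟨g₁ * g₂, h₁ * h₂, hg₁.smul hg₂, hh₁.smul hh₂, fun z hz ↦ ?_, fun z hz ↦ ?_⟩
  · simp only [Pi.mul_apply, eq₁ z hz, eq₂ z hz, mul_mul_mul_comm]
  · simp only [Pi.mul_apply, norm_mul, norm_eq₁ z hz, norm_eq₂ z hz]

lemma of_eq_sq {f g : ℂ → ℂ} (hg : DiffContOnCl ℂ g (ball 0 1))
    (h : ∀ z ∈ closedBall 0 1, f z = g z ^ 2) : HasBalancedFactorization f :=
  ⟨g, g, hg, hg, fun z hz ↦ by rw [h z hz, sq], fun _ _ ↦ rfl⟩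

lemma const (w : ℂ) : HasBalancedFactorization fun _ ↦ w :=
  have ⟨_, hr⟩ := IsAlgClosed.exists_pow_nat_eq w two_pos
  of_eq_sq diffContOnCl_const fun _ _ ↦ hr.symm

end HasBalancedFactorization

lemma exists_diffContOnCl_sq_eq_one_sub_mul {w : ℂ} (hw : ‖w‖ ≤ 1) :
    ∃ g : ℂ → ℂ, DiffContOnCl ℂ g (ball 0 1) ∧ ∀ z, 1 - w * z = g z ^ 2 := by
  have re_ge (z : ℂ) : 1 - ‖z‖ ≤ (1 - w * z).re := by
    have : (w * z).re ≤ ‖z‖ := calc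
      (w * z).re ≤ ‖w * z‖ := Complex.re_le_norm _
      _ = ‖w‖ * ‖z‖ := norm_mul w z
      _ ≤ ‖z‖ := mul_le_of_le_one_left (norm_nonneg z) hw
    rw [Complex.sub_re, Complex.one_re]
    gcongr
  have maps_re_pos : Set.MapsTo (fun z ↦ 1 - w * z) (ball 0 1) {x | 0 < x.re} := fun z hz ↦
    (sub_pos.mpr (mem_ball_zero_iff.mp hz)).trans_le (re_ge z)
  have maps_re_nonneg : Set.MapsTo (fun z ↦ 1 - w * z) (closedBall 0 1) {x | 0 ≤ x.re} :=
    fun z hz ↦ (sub_nonneg.mpr (mem_closedBall_zero_iff.mp hz)).trans (re_ge z)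
  refine ⟨fun z ↦ (1 - w * z).sqrt, ⟨?_, ?_⟩, fun z ↦ by simp [Complex.sqrt]⟩
  · exact Complex.differentiableOn_sqrt.comp (by fun_prop) fun z hz ↦ Or.inl (maps_re_pos hz)
  · rw [closure_ball _ one_ne_zero]
    have sqrt_continuousOn : ContinuousOn Complex.sqrt {x | 0 ≤ x.re} := fun x hx ↦
      (Complex.continuousAt_sqrt (Or.inl hx)).continuousWithinAt
    exact sqrt_continuousOn.comp (by fun_prop) maps_re_nonneg

lemma norm_sub_eq_norm_one_sub_conj_mul {𝕜 : Type*} [RCLike 𝕜] {z : 𝕜} (hz : ‖z‖ = 1) (w : 𝕜) :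
    ‖z - w‖ = ‖1 - conj w * z‖ := by
  have hzz : z * conj z = 1 := by simp [RCLike.mul_conj, hz]
  calc ‖z - w‖ = ‖z * conj (z - w)‖ := by rw [norm_mul, hz, one_mul, RCLike.norm_conj]
    _ = ‖1 - conj w * z‖ := by rw [map_sub, mul_sub, hzz, mul_comm z]

namespace HasBalancedFactorization

lemma sub_const_of_one_le_norm {w : ℂ} (hw : 1 ≤ ‖w‖) :
    HasBalancedFactorization fun z ↦ z - w := by
  have hw₀ : w ≠ 0 := norm_pos_iff.mp (one_pos.trans_le hw)
  obtain ⟨g, hg, hg_sq⟩ := exists_diffContOnCl_sq_eq_one_sub_mul (w := w⁻¹)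
    (by rw [norm_inv]; exact inv_le_one_of_one_le₀ hw)
  have h := (const (-w)).mul (of_eq_sq hg fun z _ ↦ hg_sq z)
  convert h using 2 with z
  simp only [Pi.mul_apply]
  field

lemma sub_const_of_norm_lt_one {w : ℂ} (hw : ‖w‖ < 1) :
    HasBalancedFactorization fun z ↦ z - w := by
  obtain ⟨g, hg, hg_sq⟩ := exists_diffContOnCl_sq_eq_one_sub_mul (w := conj w)
    (by rw [RCLike.norm_conj]; exact hw.le)
  have hg₀ : ∀ z ∈ closedBall 0 1, g z ≠ 0 := fun z hz h₀ ↦ by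
    have conj_mul_eq : conj w * z = 1 := by
      rw [eq_comm, ← sub_eq_zero, hg_sq, h₀, zero_pow two_ne_zero]
    have : ‖conj w * z‖ < 1 := by
      rw [norm_mul, RCLike.norm_conj]
      exact mul_lt_one_of_nonneg_of_lt_one_left (norm_nonneg w) hw (mem_closedBall_zero_iff.mp hz)
    simp [conj_mul_eq] at this
  refine ⟨g, fun z ↦ (g z)⁻¹ * (z - w), hg, (hg.inv ?_).smul ?_, fun z hz ↦ ?_, fun z hz ↦ ?_⟩
  · rwa [closure_ball _ one_ne_zero]
  · exact Differentiable.diffContOnCl (by fun_prop)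
  · rw [mul_inv_cancel_left₀ (hg₀ z hz)]
  · have hgz : ‖g z‖ ≠ 0 := norm_ne_zero_iff.mpr (hg₀ z (sphere_subset_closedBall hz))
    rw [norm_mul, norm_inv, norm_sub_eq_norm_one_sub_conj_mul (mem_sphere_zero_iff_norm.mp hz),
      hg_sq, norm_pow, sq, inv_mul_cancel_left₀ hgz]

lemma sub_const (w : ℂ) : HasBalancedFactorization fun z ↦ z - w :=
  (le_or_gt 1 ‖w‖).elim sub_const_of_one_le_norm sub_const_of_norm_lt_one

lemma polynomial_eval (p : Polynomial ℂ) : HasBalancedFactorization fun z ↦ p.eval z := by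
  have prod_roots (s : Multiset ℂ) :
      HasBalancedFactorization fun z ↦ (s.map fun w ↦ z - w).prod := by
    induction s using Multiset.induction_on with
    | empty => simpa only [Multiset.map_zero, Multiset.prod_zero] using const 1
    | cons w s ih =>
      simpa only [Multiset.map_cons, Multiset.prod_cons] using! (sub_const w).mul ih
  simp only [(IsAlgClosed.splits p).eval_eq_prod_roots]
  exact (const p.leadingCoeff).mul (prod_roots p.roots)

lemma sum_norm_taylorCoeff_sq_div_le {f : ℂ → ℂ} (hf : HasBalancedFactorization f) (N : ℕ) :
    ∑ n ∈ range N, ‖taylorCoeff f 0 n‖ ^ 2 / (n + 1)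
      ≤ Real.circleAverage (fun z ↦ ‖f z‖) 0 1 ^ 2 := by
  obtain ⟨g, h, hg, hh, f_eq, norm_eq⟩ := hf
  have hball : ball (0 : ℂ) 1 ∈ nhds 0 := ball_mem_nhds 0 one_pos
  have coeff_eq (n : ℕ) : taylorCoeff f 0 n
      = ∑ p ∈ antidiagonal n, taylorCoeff g 0 p.1 * taylorCoeff h 0 p.2 := by
    have f_eventuallyEq : f =ᶠ[nhds 0] g * h :=
      Filter.mem_of_superset hball fun z hz ↦ f_eq z (ball_subset_closedBall hz)
    rw [taylorCoeff_congr f_eventuallyEq,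
      taylorCoeff_mul (hg.differentiableOn.analyticAt hball).contDiffAt
        (hh.differentiableOn.analyticAt hball).contDiffAt]
  have bessel {q : ℂ → ℂ} (hq : DiffContOnCl ℂ q (ball 0 1))
      (hfq : ∀ z ∈ sphere 0 1, ‖q z‖ ^ 2 = ‖f z‖) :
      ∑ n ∈ range N, ‖taylorCoeff q 0 n‖ ^ 2 ≤ Real.circleAverage (fun z ↦ ‖f z‖) 0 1 := by
    rw [← abs_one (α := ℝ)] at hfq
    simpa only [one_pow, one_mul, Real.circleAverage_congr_sphere hfq] using
      sum_norm_taylorCoeff_sq_le_circleAverage one_pos hq (range N)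
  have norm_f (z : ℂ) (hz : z ∈ sphere 0 1) : ‖f z‖ = ‖g z‖ * ‖h z‖ := by
    rw [f_eq z (sphere_subset_closedBall hz), norm_mul]
  have bessel_g := bessel hg fun z hz ↦ by rw [norm_f z hz, ← norm_eq z hz, sq]
  have bessel_h := bessel hh fun z hz ↦ by rw [norm_f z hz, norm_eq z hz, sq]
  calc ∑ n ∈ range N, ‖taylorCoeff f 0 n‖ ^ 2 / (n + 1)
      ≤ (∑ n ∈ range N, ‖taylorCoeff g 0 n‖ ^ 2) * ∑ n ∈ range N, ‖taylorCoeff h 0 n‖ ^ 2 := by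
        simp only [coeff_eq]
        exact sum_norm_sum_antidiagonal_mul_sq_div_le _ _ N
    _ ≤ Real.circleAverage (fun z ↦ ‖f z‖) 0 1 ^ 2 := by
        rw [sq]
        gcongr
        exact Real.circleAverage_nonneg_of_nonneg fun z _ ↦ norm_nonneg (f z)

end HasBalancedFactorization

/-- Carleman's inequality, for polynomials. -/
theorem sum_norm_coeff_sq_div_le_circleAverage_norm_sq (p : Polynomial ℂ) (N : ℕ) :
    ∑ n ∈ range N, ‖p.coeff n‖ ^ 2 / (n + 1)
      ≤ Real.circleAverage (fun z ↦ ‖p.eval z‖) 0 1 ^ 2 := by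
  simpa only [taylorCoeff_polynomial_eval, Polynomial.taylor_zero] using
    (HasBalancedFactorization.polynomial_eval p).sum_norm_taylorCoeff_sq_div_le N

end BalancedFactorization

lemma integral_Ioc_exp_eq_circleAverage {E : Type*} [NormedAddCommGroup E] [NormedSpace ℝ E]
    (f : ℂ → E) :
    ∫ θ in Set.Ioc (0 : ℝ) 1, f (Complex.exp (2 * Real.pi * Complex.I * θ))
      = Real.circleAverage f 0 1 := by
  have exp_eq (θ : ℝ) :
      Complex.exp (2 * Real.pi * Complex.I * θ) = circleMap 0 1 (2 * Real.pi * θ) := by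
    simp [circleMap, mul_right_comm]
  simp only [exp_eq]
  rw [← intervalIntegral.integral_of_le zero_le_one,
    intervalIntegral.integral_comp_mul_left (fun θ ↦ f (circleMap 0 1 θ)) Real.two_pi_pos.ne',
    mul_zero, mul_one, Real.circleAverage]

lemma two_rpow_neg_natCast_le_inv_succ (n : ℕ) : (2 : ℝ) ^ (-(n : ℝ)) ≤ ((n : ℝ) + 1)⁻¹ := by
  rw [Real.rpow_neg two_pos.le, Real.rpow_natCast]
  gcongr
  exact_mod_cast Nat.lt_two_pow_self (n := n)

/-- Bonami's one-variable hypercontractivity inequality: for every polynomial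
`∑_{ν=0}^m a_ν z^ν` in one complex variable,
`(∑ 2^{-ν} |a_ν|²)^{1/2} ≤ ∫_𝕋 |∑ a_ν z^ν| dμ(z)`, where `μ` is the normalized
Haar measure on the circle (parametrized by `z = e^{2πiθ}`, `θ ∈ (0,1]`). -/
theorem bonami_one_variable (m : ℕ) (a : ℕ → ℂ) :
    Real.sqrt (∑ ν ∈ Finset.range (m + 1), (2 : ℝ) ^ (-(ν : ℝ)) * ‖a ν‖ ^ 2)
      ≤ ∫ θ in Set.Ioc (0 : ℝ) 1,
          ‖∑ ν ∈ Finset.range (m + 1),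
            a ν * Complex.exp (2 * Real.pi * Complex.I * θ) ^ ν‖ := by
  let p : Polynomial ℂ := ∑ ν ∈ range (m + 1), Polynomial.monomial ν (a ν)
  have coeff_p : ∀ ν ∈ range (m + 1), p.coeff ν = a ν := fun ν hν ↦ by
    simp_all [p, Polynomial.finsetSum_coeff, Polynomial.coeff_monomial]
  have eval_p (z : ℂ) : ∑ ν ∈ range (m + 1), a ν * z ^ ν = p.eval z := by
    simp only [p, Polynomial.eval_finsetSum, Polynomial.eval_monomial]
  simp only [eval_p]
  rw [integral_Ioc_exp_eq_circleAverage fun z ↦ ‖p.eval z‖]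
  refine Real.sqrt_le_iff.mpr ⟨Real.circleAverage_nonneg_of_nonneg fun z _ ↦ norm_nonneg _, ?_⟩
  calc ∑ ν ∈ range (m + 1), (2 : ℝ) ^ (-(ν : ℝ)) * ‖a ν‖ ^ 2
      ≤ ∑ ν ∈ range (m + 1), ((ν : ℝ) + 1)⁻¹ * ‖a ν‖ ^ 2 := by
        gcongr with ν
        exact two_rpow_neg_natCast_le_inv_succ ν
    _ = ∑ ν ∈ range (m + 1), ‖p.coeff ν‖ ^ 2 / (ν + 1) :=
        sum_congr rfl fun ν hν ↦ by rw [coeff_p ν hν, div_eq_inv_mul]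
    _ ≤ Real.circleAverage (fun z ↦ ‖p.eval z‖) 0 1 ^ 2 :=
        sum_norm_coeff_sq_div_le_circleAverage_norm_sq p (m + 1)
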